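/- arXiv:2312.16146 — 2 statements merged into one kernel-verified Lean document; each statement's English description precedes it below -/
import Mathlib

section
/- Let X be a real normed space, σ the incenter mixer on X, and τ(a,b,c) = a + b + c - 2σ(a,b,c) the Nagel co-mixer. Then for all a, b, c ∈ X, the point τ(a,b,c) belongs to the convex hull of the set {a, b, c}. -/
/-!
With `p = ‖b - c‖`, `q = ‖a - c‖`, `r = ‖a - b‖` and `s = p + q + r ≠ 0`, subtracting twice the
incenter weight `p / s` from `1` leaves `(q + r - p) / s`, and similarly for the other two points.
These barycentric weights sum to `3 - 2 = 1`, and they are nonnegative by the triangle inequality.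
-/

open scoped Classical in
/-- The incenter mixer on a real normed space. -/
noncomputable def incenterMixer {X : Type*} [NormedAddCommGroup X] [NormedSpace ℝ X]
    (a b c : X) : X :=
  if a = b ∧ b = c then a
  else (‖b - c‖ + ‖a - c‖ + ‖a - b‖)⁻¹ • (‖b - c‖ • a + ‖a - c‖ • b + ‖a - b‖ • c)

/-- The Nagel co-mixer `τ(a,b,c) = a + b + c - 2σ(a,b,c)` on a real normed space. -/
noncomputable def nagelComixer {X : Type*} [NormedAddCommGroup X] [NormedSpace ℝ X]
    (a b c : X) : X :=
  a + b + c - (2 : ℝ) • incenterMixer a b c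

section Barycentric

variable {𝕜 E : Type*} [Field 𝕜] [AddCommGroup E] [Module 𝕜 E]

theorem add_sub_two_smul_weightedMean_eq {p q r : 𝕜} (hs : p + q + r ≠ 0) (a b c : E) :
    a + b + c - (2 : 𝕜) • ((p + q + r)⁻¹ • (p • a + q • b + r • c)) =
      ((q + r - p) / (p + q + r)) • a + ((p + r - q) / (p + q + r)) • b +
        ((p + q - r) / (p + q + r)) • c := by
  match_scalars <;> field

variable [LinearOrder 𝕜] [IsStrictOrderedRing 𝕜]

theorem smul_add_smul_add_smul_mem_convexHull {u v w : 𝕜} (hu : 0 ≤ u) (hv : 0 ≤ v) (hw : 0 ≤ w)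
    (huvw : u + v + w = 1) (a b c : E) :
    u • a + v • b + w • c ∈ convexHull 𝕜 ({a, b, c} : Set E) := by
  have hmem := (convex_convexHull 𝕜 ({a, b, c} : Set E)).sum_mem
    (t := Finset.univ) (w := ![u, v, w]) (z := ![a, b, c])
    (by simp [Fin.forall_fin_succ, hu, hv, hw])
    (by simpa [Fin.sum_univ_three] using huvw)
    (fun i _ ↦ subset_convexHull 𝕜 _ (by fin_cases i <;> simp))
  simpa [Fin.sum_univ_three] using hmem

theorem add_sub_two_smul_weightedMean_mem_convexHull {p q r : 𝕜} (hs : 0 < p + q + r)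
    (hp : p ≤ q + r) (hq : q ≤ p + r) (hr : r ≤ p + q) (a b c : E) :
    a + b + c - (2 : 𝕜) • ((p + q + r)⁻¹ • (p • a + q • b + r • c)) ∈
      convexHull 𝕜 ({a, b, c} : Set E) := by
  have weights_sum :
      (q + r - p) / (p + q + r) + (p + r - q) / (p + q + r) + (p + q - r) / (p + q + r) = 1 := by
    field
  rw [add_sub_two_smul_weightedMean_eq hs.ne']
  exact smul_add_smul_add_smul_mem_convexHull (div_nonneg (sub_nonneg.2 hp) hs.le)
    (div_nonneg (sub_nonneg.2 hq) hs.le) (div_nonneg (sub_nonneg.2 hr) hs.le) weights_sum a b c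

end Barycentric

theorem norm_sub_add_norm_sub_add_norm_sub_pos {E : Type*} [NormedAddCommGroup E] {a b c : E}
    (h : ¬(a = b ∧ b = c)) : 0 < ‖b - c‖ + ‖a - c‖ + ‖a - b‖ := by
  rcases not_and_or.1 h with hab | hbc
  · have := norm_sub_pos_iff.2 hab
    positivity
  · have := norm_sub_pos_iff.2 hbc
    positivity

section Mixer

variable {X : Type*} [NormedAddCommGroup X] [NormedSpace ℝ X] {a b c : X}

theorem incenterMixer_self (a : X) : incenterMixer a a a = a :=
  if_pos ⟨rfl, rfl⟩

theorem incenterMixer_of_not_all_eq (h : ¬(a = b ∧ b = c)) :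
    incenterMixer a b c =
      (‖b - c‖ + ‖a - c‖ + ‖a - b‖)⁻¹ • (‖b - c‖ • a + ‖a - c‖ • b + ‖a - b‖ • c) :=
  if_neg h

theorem nagelComixer_self (a : X) : nagelComixer a a a = a := by
  rw [nagelComixer, incenterMixer_self]
  module

end Mixer

/-- The Nagel co-mixer of `a, b, c` lies in the convex hull of `{a, b, c}`. -/
theorem nagelComixer_mem_convexHull {X : Type*} [NormedAddCommGroup X] [NormedSpace ℝ X]
    (a b c : X) : nagelComixer a b c ∈ convexHull ℝ ({a, b, c} : Set X) := by
  by_cases h : a = b ∧ b = c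
  · obtain ⟨rfl, rfl⟩ := h
    rw [nagelComixer_self]
    exact subset_convexHull ℝ _ (Set.mem_insert a _)
  · have hbc : ‖b - c‖ ≤ ‖a - c‖ + ‖a - b‖ := by
      simpa only [dist_eq_norm, add_comm] using dist_triangle_left b c a
    have hac : ‖a - c‖ ≤ ‖b - c‖ + ‖a - b‖ := by
      simpa only [dist_eq_norm, add_comm] using dist_triangle a b c
    have hab : ‖a - b‖ ≤ ‖b - c‖ + ‖a - c‖ := by
      simpa only [dist_eq_norm, add_comm] using dist_triangle_right a b c
    rw [nagelComixer, incenterMixer_of_not_all_eq h]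
    exact add_sub_two_smul_weightedMean_mem_convexHull
      (norm_sub_add_norm_sub_add_norm_sub_pos h) hbc hac hab a b c
end

section
/- Let X be a real normed space, σ the incenter mixer on X, and τ(a,b,c) = a + b + c - 2σ(a,b,c) the Nagel co-mixer. Then for all a, b, c, a', b', c' ∈ X: (1) the Hausdorff distance satisfies d_H({σ(a,b,c), τ(a,b,c)}, {σ(a',b',c'), τ(a',b',c')}) ≤ 9 · d_H({a,b,c}, {a',b',c'}); (2) if {a,b,c} has at most two elements then {σ(a,b,c), τ(a,b,c)} = {a,b,c}; and (3) both σ(a,b,c) and τ(a,b,c) lie in the convex hull of {a,b,c}. (This is the 9-Lipschitz retraction from triples onto pairs whose image is contained in the convex hull.) -/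
section Metric

variable {α : Type*} [PseudoMetricSpace α]

lemma exists_dist_le_hausdorffDist_of_isCompact {s t : Set α} (hs : Bornology.IsBounded s)
    (ht : IsCompact t) (ht' : t.Nonempty) {x : α} (hx : x ∈ s) :
    ∃ y ∈ t, dist x y ≤ Metric.hausdorffDist s t := by
  obtain ⟨y, hy, hxy⟩ := ht.exists_infDist_eq_dist ht' x
  refine ⟨y, hy, hxy ▸ Metric.infDist_le_hausdorffDist_of_mem hx ?_⟩
  exact Metric.hausdorffEDist_ne_top_of_nonempty_of_bounded ⟨x, hx⟩ ht' hs ht.isBounded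

lemma exists_dist_le_hausdorffDist_range {ι κ : Type*} [Finite ι] [Finite κ] [Nonempty κ]
    (f : ι → α) (g : κ → α) (i : ι) :
    ∃ j, dist (f i) (g j) ≤ Metric.hausdorffDist (Set.range f) (Set.range g) := by
  simpa only [Set.exists_range_iff] using
    exists_dist_le_hausdorffDist_of_isCompact (Set.finite_range f).isBounded
      (Set.finite_range g).isCompact (Set.range_nonempty g) (Set.mem_range_self i)

lemma hausdorffDist_pair_le {x y x' y' : α} {r : ℝ} (hx : dist x x' ≤ r) (hy : dist y y' ≤ r) :
    Metric.hausdorffDist ({x, y} : Set α) {x', y'} ≤ r := by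
  refine Metric.hausdorffDist_le_of_mem_dist (dist_nonneg.trans hx) ?_ ?_
  · rintro _ (rfl | rfl)
    exacts [⟨x', by simp, hx⟩, ⟨y', by simp, hy⟩]
  · rintro _ (rfl | rfl)
    exacts [⟨x, by simp, by rwa [dist_comm]⟩, ⟨y, by simp, by rwa [dist_comm]⟩]

end Metric

section Matching

variable {α β : Type*} [Fintype α] [Fintype β] {R : α → β → Prop}

lemma exists_equiv_or_exists_card_lt (hcard : Fintype.card α = Fintype.card β) :
    (∃ e : α ≃ β, ∀ a, R a (e a)) ∨
      ∃ (A : Finset α) (B : Finset β), B.card < A.card ∧ ∀ a ∈ A, ∀ b, R a b → b ∈ B := by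
  classical
  by_cases hall : ∀ A : Finset α, A.card ≤ (Finset.univ.filter fun b => ∃ a ∈ A, R a b).card
  · obtain ⟨f, hf, hR⟩ := (Fintype.all_card_le_filter_rel_iff_exists_injective R).1 hall
    exact .inl ⟨.ofBijective f ((Fintype.bijective_iff_injective_and_card f).2 ⟨hf, hcard⟩), hR⟩
  · push Not at hall
    obtain ⟨A, hA⟩ := hall
    exact .inr ⟨A, _, hA, fun a ha b hab => (Finset.mem_filter_univ b).2 ⟨a, ha, hab⟩⟩

lemma exists_equiv_or_exists_cross (hα : Fintype.card α = 3) (hβ : Fintype.card β = 3)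
    (hl : ∀ a, ∃ b, R a b) (hr : ∀ b, ∃ a, R a b) :
    (∃ e : α ≃ β, ∀ a, R a (e a)) ∨
      ∃ a b, (∀ a' ≠ a, R a' b) ∧ ∀ b' ≠ b, R a b' := by
  classical
  refine (exists_equiv_or_exists_card_lt (hα.trans hβ.symm)).imp_right ?_
  rintro ⟨A, B, hcard, hAB⟩
  -- Neither a singleton nor all of `α` violates Hall's condition, so `#A = 2` and `#B = 1`.
  have hB_pos : 0 < B.card := by
    obtain ⟨a, ha⟩ := Finset.card_pos.1 hcard.pos
    obtain ⟨b, hab⟩ := hl a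
    exact Finset.card_pos.2 ⟨b, hAB a ha b hab⟩
  have hA_ne : A ≠ Finset.univ := by
    rintro rfl
    have hB_univ : B = Finset.univ := Finset.eq_univ_of_forall fun b =>
      let ⟨a, hab⟩ := hr b; hAB a (Finset.mem_univ a) b hab
    rw [hB_univ, Finset.card_univ, Finset.card_univ] at hcard
    omega
  have hA_lt : A.card < 3 := hα ▸ (Finset.card_lt_iff_ne_univ A).2 hA_ne
  obtain ⟨b, rfl⟩ := Finset.card_eq_one.1 (show B.card = 1 by omega)
  obtain ⟨a, ha⟩ := Finset.card_eq_one.1 (show Aᶜ.card = 1 by rw [Finset.card_compl]; omega)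
  obtain rfl : A = {a}ᶜ := by rw [← ha, compl_compl]
  simp only [Finset.mem_compl, Finset.mem_singleton] at hAB
  refine ⟨a, b, fun a' ha' => ?_, fun b' hb' => ?_⟩
  · obtain ⟨b', hab'⟩ := hl a'
    exact hAB a' ha' b' hab' ▸ hab'
  · obtain ⟨a', hab'⟩ := hr b'
    have ha' : a' = a := by_contra fun ha' => hb' (hAB a' ha' b' hab')
    exact ha' ▸ hab'

end Matching

lemma sum_fin_three_eq_rotate {M : Type*} [AddCommMonoid M] (f : Fin 3 → M) (i : Fin 3) :
    ∑ j, f j = f i + f (i + 1) + f (i + 2) := by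
  rw [← Equiv.sum_comp (Equiv.addLeft i) f, Fin.sum_univ_three]
  simp only [Equiv.coe_addLeft, add_zero]

lemma range_fin_three_eq_rotate {α : Type*} (f : Fin 3 → α) (i : Fin 3) :
    Set.range f = {f i, f (i + 1), f (i + 2)} := by
  have huniv : ∀ i j : Fin 3, j = i ∨ j = i + 1 ∨ j = i + 2 := by decide
  rw [← Set.image_univ, ← Set.eq_univ_of_forall (s := {i, i + 1, i + 2}) (huniv i),
    Set.image_insert_eq, Set.image_pair]

section Triangle

variable {X : Type*} [PseudoMetricSpace X]

/-- The length of the side of the triangle `z` opposite to the vertex `z i`; the indices `i + 1`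
and `i + 2` in `Fin 3` run over the other two vertices. -/
def oppositeSide (z : Fin 3 → X) (i : Fin 3) : ℝ :=
  dist (z (i + 1)) (z (i + 2))

/-- The perimeter of the triangle `z`. -/
def perimeter (z : Fin 3 → X) : ℝ :=
  ∑ i, oppositeSide z i

open scoped Classical in
/-- The normalized barycentric coordinates of the incenter of `z`. For a constant triple all
coordinates are `1 / 3`, so that they always add up to `1`. -/
noncomputable def incenterWeight (z : Fin 3 → X) (i : Fin 3) : ℝ :=
  if perimeter z = 0 then 1 / 3 else oppositeSide z i / perimeter z

variable (z : Fin 3 → X) (i : Fin 3)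

lemma oppositeSide_nonneg : 0 ≤ oppositeSide z i :=
  dist_nonneg

lemma perimeter_nonneg : 0 ≤ perimeter z :=
  Finset.sum_nonneg fun i _ => oppositeSide_nonneg z i

lemma perimeter_eq_rotate :
    perimeter z = oppositeSide z i + oppositeSide z (i + 1) + oppositeSide z (i + 2) :=
  sum_fin_three_eq_rotate _ i

lemma dist_add_one_eq_oppositeSide : dist (z i) (z (i + 1)) = oppositeSide z (i + 2) := by
  rw [oppositeSide, add_assoc, add_assoc, show (2 + 1 : Fin 3) = 0 from rfl,
    show (2 + 2 : Fin 3) = 1 from rfl, add_zero]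

lemma dist_add_two_eq_oppositeSide : dist (z i) (z (i + 2)) = oppositeSide z (i + 1) := by
  rw [oppositeSide, add_assoc, add_assoc, show (1 + 1 : Fin 3) = 2 from rfl,
    show (1 + 2 : Fin 3) = 0 from rfl, add_zero, dist_comm]

lemma two_mul_oppositeSide_le_perimeter : 2 * oppositeSide z i ≤ perimeter z := by
  have htri : oppositeSide z i ≤ dist (z i) (z (i + 1)) + dist (z i) (z (i + 2)) :=
    dist_triangle_left _ _ _
  rw [dist_add_one_eq_oppositeSide, dist_add_two_eq_oppositeSide] at htri
  linarith [perimeter_eq_rotate z i]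

lemma sum_dist_vertex : ∑ j, dist (z i) (z j) = perimeter z - oppositeSide z i := by
  rw [sum_fin_three_eq_rotate _ i, dist_self, dist_add_one_eq_oppositeSide,
    dist_add_two_eq_oppositeSide, perimeter_eq_rotate z i]
  ring

lemma oppositeSide_eq_zero_of_perimeter_eq_zero (h : perimeter z = 0) : oppositeSide z i = 0 := by
  linarith [oppositeSide_nonneg z i, two_mul_oppositeSide_le_perimeter z i]

lemma perimeter_mul_incenterWeight : perimeter z * incenterWeight z i = oppositeSide z i := by
  rw [incenterWeight]
  split_ifs with h
  · rw [h, zero_mul, oppositeSide_eq_zero_of_perimeter_eq_zero z i h]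
  · exact mul_div_cancel₀ _ h

lemma incenterWeight_nonneg : 0 ≤ incenterWeight z i := by
  rw [incenterWeight]
  split_ifs
  · norm_num
  · exact div_nonneg (oppositeSide_nonneg z i) (perimeter_nonneg z)

lemma incenterWeight_le_half : incenterWeight z i ≤ 1 / 2 := by
  rw [incenterWeight]
  split_ifs with h
  · norm_num
  · rw [div_le_iff₀ ((perimeter_nonneg z).lt_of_ne' h)]
    linarith [two_mul_oppositeSide_le_perimeter z i]

lemma sum_incenterWeight : ∑ i, incenterWeight z i = 1 := by
  simp only [incenterWeight]
  split_ifs with h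
  · norm_num
  · rw [← Finset.sum_div, ← perimeter, div_self h]

lemma oppositeSide_comp_perm (e : Equiv.Perm (Fin 3)) :
    oppositeSide (z ∘ e) i = oppositeSide z (e i) := by
  have other_vertices : ∀ (e : Equiv.Perm (Fin 3)) (i : Fin 3),
      e (i + 1) = e i + 1 ∧ e (i + 2) = e i + 2 ∨
        e (i + 1) = e i + 2 ∧ e (i + 2) = e i + 1 := by decide
  rcases other_vertices e i with ⟨h₁, h₂⟩ | ⟨h₁, h₂⟩
  · simp only [oppositeSide, Function.comp_apply, h₁, h₂]
  · simp only [oppositeSide, Function.comp_apply, h₁, h₂, dist_comm]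

lemma incenterWeight_comp_perm (e : Equiv.Perm (Fin 3)) :
    incenterWeight (z ∘ e) i = incenterWeight z (e i) := by
  have hper : perimeter (z ∘ e) = perimeter z := by
    simp only [perimeter, oppositeSide_comp_perm, Equiv.sum_comp e]
  simp only [incenterWeight, hper, oppositeSide_comp_perm]

lemma abs_oppositeSide_sub_le {z z' : Fin 3 → X} {r : ℝ} (hz : ∀ i, dist (z i) (z' i) ≤ r)
    (i : Fin 3) : |oppositeSide z' i - oppositeSide z i| ≤ 2 * r := by
  have := dist_dist_dist_le (z (i + 1)) (z (i + 2)) (z' (i + 1)) (z' (i + 2))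
  rw [dist_comm, Real.dist_eq] at this
  simp only [oppositeSide]
  linarith [hz (i + 1), hz (i + 2)]

variable {z} {i} {x : X} {r : ℝ}

lemma incenterWeight_mul_dist_le_of_two_vertices_near (h₁ : dist (z (i + 1)) x ≤ r)
    (h₂ : dist (z (i + 2)) x ≤ r) : incenterWeight z i * dist (z i) x ≤ r := by
  have hvertex : dist (z i) x ≤ (oppositeSide z (i + 1) + oppositeSide z (i + 2)) / 2 + r := by
    rw [← dist_add_one_eq_oppositeSide, ← dist_add_two_eq_oppositeSide]
    linarith [dist_triangle (z i) (z (i + 1)) x, dist_triangle (z i) (z (i + 2)) x]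
  have hside : oppositeSide z i ≤ 2 * r := by
    rw [oppositeSide]
    linarith [dist_triangle_right (z (i + 1)) (z (i + 2)) x]
  have hsum := sum_incenterWeight z
  rw [sum_fin_three_eq_rotate _ i] at hsum
  have hi := incenterWeight_nonneg z i
  have hi₁ := incenterWeight_nonneg z (i + 1)
  have hi₂ := incenterWeight_nonneg z (i + 2)
  calc incenterWeight z i * dist (z i) x
      ≤ incenterWeight z i * ((oppositeSide z (i + 1) + oppositeSide z (i + 2)) / 2 + r) := by
        gcongr
    -- The weights are proportional to the sides: `λᵢ wⱼ = λⱼ wᵢ`.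
    _ = (incenterWeight z (i + 1) + incenterWeight z (i + 2)) * (oppositeSide z i / 2) +
          incenterWeight z i * r := by
        simp only [← perimeter_mul_incenterWeight]
        ring
    _ ≤ (incenterWeight z (i + 1) + incenterWeight z (i + 2)) * r + incenterWeight z i * r := by
        gcongr
        linarith
    _ = r := by linear_combination r * hsum

end Triangle

section Incenter

variable {X : Type*} [NormedAddCommGroup X] [NormedSpace ℝ X]

/-- The incenter mixer `σ` as a function of an indexed triple. -/
noncomputable def incenter (z : Fin 3 → X) : X :=
  incenterMixer (z 0) (z 1) (z 2)

/-- The Nagel co-mixer `τ` as a function of an indexed triple. -/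
noncomputable def nagelPoint (z : Fin 3 → X) : X :=
  nagelComixer (z 0) (z 1) (z 2)

variable (z : Fin 3 → X)

lemma incenter_eq_sum : incenter z = ∑ i, incenterWeight z i • z i := by
  by_cases h : z 0 = z 1 ∧ z 1 = z 2
  · have hconst : ∀ i, z i = z 0 := by
      intro i
      fin_cases i
      exacts [rfl, h.1.symm, (h.1.trans h.2).symm]
    rw [incenter, incenterMixer, if_pos h]
    simp only [hconst, ← Finset.sum_smul, sum_incenterWeight, one_smul]
  · have hper : perimeter z ≠ 0 := fun h0 =>
      h ⟨dist_eq_zero.1 (oppositeSide_eq_zero_of_perimeter_eq_zero z 2 h0),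
        dist_eq_zero.1 (oppositeSide_eq_zero_of_perimeter_eq_zero z 0 h0)⟩
    have h₀ : ‖z 1 - z 2‖ = oppositeSide z 0 := (dist_eq_norm _ _).symm
    have h₁ : ‖z 0 - z 2‖ = oppositeSide z 1 := dist_eq_norm_sub' _ _ |>.symm
    have h₂ : ‖z 0 - z 1‖ = oppositeSide z 2 := (dist_eq_norm _ _).symm
    rw [incenter, incenterMixer, if_neg h, h₀, h₁, h₂, ← Fin.sum_univ_three (oppositeSide z),
      ← perimeter]
    simp only [incenterWeight, if_neg hper, div_eq_inv_mul, mul_smul, Fin.sum_univ_three, smul_add]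

lemma nagelPoint_eq_sum_sub : nagelPoint z = ∑ i, z i - (2 : ℝ) • incenter z := by
  rw [Fin.sum_univ_three]
  rfl

lemma nagelPoint_eq_sum : nagelPoint z = ∑ i, (1 - 2 * incenterWeight z i) • z i := by
  simp only [nagelPoint_eq_sum_sub, incenter_eq_sum, Finset.smul_sum, ← Finset.sum_sub_distrib,
    sub_smul, one_smul, mul_smul]

lemma incenter_comp_perm (e : Equiv.Perm (Fin 3)) : incenter (z ∘ e) = incenter z := by
  simp only [incenter_eq_sum, incenterWeight_comp_perm, Function.comp_apply]
  exact Equiv.sum_comp e fun i => incenterWeight z i • z i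

lemma nagelPoint_comp_perm (e : Equiv.Perm (Fin 3)) : nagelPoint (z ∘ e) = nagelPoint z := by
  simp only [nagelPoint_eq_sum_sub, incenter_comp_perm, Function.comp_apply, Equiv.sum_comp e]

lemma incenter_mem_convexHull : incenter z ∈ convexHull ℝ (Set.range z) := by
  rw [incenter_eq_sum]
  exact (convex_convexHull ℝ _).sum_mem (fun i _ => incenterWeight_nonneg z i)
    (sum_incenterWeight z) fun i _ => subset_convexHull ℝ _ (Set.mem_range_self i)

lemma nagelPoint_mem_convexHull : nagelPoint z ∈ convexHull ℝ (Set.range z) := by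
  rw [nagelPoint_eq_sum]
  refine (convex_convexHull ℝ _).sum_mem (fun i _ => ?_) ?_
    fun i _ => subset_convexHull ℝ _ (Set.mem_range_self i)
  · linarith [incenterWeight_le_half z i]
  · rw [Finset.sum_sub_distrib, ← Finset.mul_sum, sum_incenterWeight]
    norm_num

lemma dist_incenter_le (x : X) : dist (incenter z) x ≤ ∑ i, incenterWeight z i * dist (z i) x := by
  rw [incenter_eq_sum]
  exact (convexOn_univ_dist x).map_sum_le (fun i _ => incenterWeight_nonneg z i)
    (sum_incenterWeight z) fun _ _ => Set.mem_univ _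

lemma sum_dist_incenter_le : ∑ i, dist (z i) (incenter z) ≤ 2 / 3 * perimeter z := by
  have hsq : 1 ≤ 3 * ∑ i, incenterWeight z i ^ 2 := by
    simpa [sum_incenterWeight] using
      sq_sum_le_card_mul_sum_sq (s := Finset.univ) (f := incenterWeight z)
  calc ∑ i, dist (z i) (incenter z)
      ≤ ∑ i, ∑ j, incenterWeight z j * dist (z j) (z i) :=
        Finset.sum_le_sum fun i _ => dist_comm (z i) (incenter z) ▸ dist_incenter_le z (z i)
    _ = ∑ j, incenterWeight z j * (perimeter z - oppositeSide z j) := by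
        rw [Finset.sum_comm]
        simp only [← Finset.mul_sum, sum_dist_vertex]
    _ = ∑ j, (incenterWeight z j * perimeter z - incenterWeight z j ^ 2 * perimeter z) :=
        Finset.sum_congr rfl fun j _ => by rw [← perimeter_mul_incenterWeight z j]; ring
    _ = perimeter z * (1 - ∑ i, incenterWeight z i ^ 2) := by
        rw [Finset.sum_sub_distrib, ← Finset.sum_mul, ← Finset.sum_mul, sum_incenterWeight]
        ring
    _ ≤ perimeter z * (2 / 3) := by gcongr; exacts [perimeter_nonneg z, by linarith]
    _ = 2 / 3 * perimeter z := mul_comm _ _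

lemma sum_oppositeSide_smul_sub_incenter :
    ∑ i, oppositeSide z i • (z i - incenter z) = 0 := by
  simp only [← perimeter_mul_incenterWeight, mul_smul, ← Finset.smul_sum, smul_sub,
    Finset.sum_sub_distrib, ← Finset.sum_smul, sum_incenterWeight, one_smul, ← incenter_eq_sum,
    sub_self]

variable {z} {z' : Fin 3 → X} {r : ℝ}

lemma dist_sum_incenterWeight_smul_incenter_le
    (hside : ∀ i, |oppositeSide z' i - oppositeSide z i| ≤ r)
    (hper : perimeter z ≤ perimeter z') :
    dist (∑ i, incenterWeight z' i • z i) (incenter z) ≤ 2 / 3 * r := by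
  have hr : 0 ≤ r := (abs_nonneg _).trans (hside 0)
  have hdiff : ∑ i, incenterWeight z' i • z i - incenter z =
      ∑ i, incenterWeight z' i • (z i - incenter z) := by
    simp only [smul_sub, Finset.sum_sub_distrib, ← Finset.sum_smul, sum_incenterWeight, one_smul]
  rw [dist_eq_norm, hdiff]
  rcases (perimeter_nonneg z').eq_or_lt with hper' | hper'
  · have hz : ∀ i, z i = incenter z := fun i => dist_le_zero.1 <|
      calc dist (z i) (incenter z)
          ≤ ∑ j, dist (z j) (incenter z) :=
            Finset.single_le_sum (fun _ _ => dist_nonneg) (Finset.mem_univ i)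
        _ ≤ 0 := by linarith [sum_dist_incenter_le z]
    rw [Finset.sum_eq_zero fun i _ => by rw [← hz i, sub_self, smul_zero], norm_zero]
    positivity
  have hscaled : perimeter z' • ∑ i, incenterWeight z' i • (z i - incenter z) =
      ∑ i, (oppositeSide z' i - oppositeSide z i) • (z i - incenter z) := by
    simp only [Finset.smul_sum, smul_smul, perimeter_mul_incenterWeight, sub_smul,
      Finset.sum_sub_distrib, sum_oppositeSide_smul_sub_incenter, sub_zero]
  refine le_of_mul_le_mul_left ?_ hper'
  calc perimeter z' * ‖∑ i, incenterWeight z' i • (z i - incenter z)‖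
      = ‖∑ i, (oppositeSide z' i - oppositeSide z i) • (z i - incenter z)‖ := by
        rw [← hscaled, norm_smul, Real.norm_of_nonneg hper'.le]
    _ ≤ ∑ i, r * dist (z i) (incenter z) := norm_sum_le_of_le _ fun i _ => by
        rw [norm_smul, Real.norm_eq_abs, dist_eq_norm]
        gcongr
        exact hside i
    _ ≤ r * (2 / 3 * perimeter z') := by
        rw [← Finset.mul_sum]
        gcongr
        exact (sum_dist_incenter_le z).trans (by gcongr)
    _ = perimeter z' * (2 / 3 * r) := by ring

lemma dist_incenter_incenter_le (hz : ∀ i, dist (z i) (z' i) ≤ r) :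
    dist (incenter z) (incenter z') ≤ 7 / 3 * r := by
  wlog hper : perimeter z ≤ perimeter z' generalizing z z'
  · rw [dist_comm]
    exact this (fun i => dist_comm (z i) (z' i) ▸ hz i) (le_of_not_ge hper)
  have hmove : dist (∑ i, incenterWeight z' i • z i) (incenter z') ≤ r := by
    rw [incenter_eq_sum z', ← one_mul r, ← sum_incenterWeight z', Finset.sum_mul]
    refine dist_sum_sum_le_of_le _ fun i _ => ?_
    rw [dist_smul₀, Real.norm_of_nonneg (incenterWeight_nonneg z' i)]
    exact mul_le_mul_of_nonneg_left (hz i) (incenterWeight_nonneg z' i)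
  have hweight := dist_sum_incenterWeight_smul_incenter_le (abs_oppositeSide_sub_le hz) hper
  linarith [dist_triangle_left (incenter z) (incenter z') (∑ i, incenterWeight z' i • z i)]

lemma dist_nagelPoint_nagelPoint_le (hz : ∀ i, dist (z i) (z' i) ≤ r) :
    dist (nagelPoint z) (nagelPoint z') ≤ 23 / 3 * r := by
  have hsum : dist (∑ i, z i) (∑ i, z' i) ≤ 3 * r := by
    simpa using dist_sum_sum_le_of_le Finset.univ fun i _ => hz i
  calc dist (nagelPoint z) (nagelPoint z')
      ≤ dist (∑ i, z i) (∑ i, z' i) + dist ((2 : ℝ) • incenter z) ((2 : ℝ) • incenter z') := by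
        rw [nagelPoint_eq_sum_sub, nagelPoint_eq_sum_sub]
        exact dist_sub_sub_le _ _ _ _
    _ = dist (∑ i, z i) (∑ i, z' i) + 2 * dist (incenter z) (incenter z') := by
        rw [dist_smul₀, Real.norm_two]
    _ ≤ 23 / 3 * r := by linarith [dist_incenter_incenter_le hz]

variable {x : X} {i : Fin 3}

lemma dist_incenter_le_of_two_vertices_near (h₁ : dist (z (i + 1)) x ≤ r)
    (h₂ : dist (z (i + 2)) x ≤ r) : dist (incenter z) x ≤ 2 * r := by
  have hr : 0 ≤ r := dist_nonneg.trans h₁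
  have hsum := sum_incenterWeight z
  rw [sum_fin_three_eq_rotate _ i] at hsum
  have hi := incenterWeight_nonneg z i
  have hi₁ := incenterWeight_nonneg z (i + 1)
  have hi₂ := incenterWeight_nonneg z (i + 2)
  calc dist (incenter z) x
      ≤ incenterWeight z i * dist (z i) x + incenterWeight z (i + 1) * dist (z (i + 1)) x +
          incenterWeight z (i + 2) * dist (z (i + 2)) x :=
        (dist_incenter_le z x).trans_eq (sum_fin_three_eq_rotate _ i)
    _ ≤ r + incenterWeight z (i + 1) * r + incenterWeight z (i + 2) * r := by
        gcongr
        exact incenterWeight_mul_dist_le_of_two_vertices_near h₁ h₂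
    _ = r + (1 - incenterWeight z i) * r := by rw [← hsum]; ring
    _ ≤ 2 * r := by linarith [mul_nonneg hi hr]

lemma dist_nagelPoint_le_of_two_vertices_near (h₁ : dist (z (i + 1)) x ≤ r)
    (h₂ : dist (z (i + 2)) x ≤ r) : dist (nagelPoint z) (z i) ≤ 6 * r := by
  have hdiff : nagelPoint z - z i =
      (z (i + 1) - x) + (z (i + 2) - x) - (2 : ℝ) • (incenter z - x) := by
    rw [nagelPoint_eq_sum_sub, sum_fin_three_eq_rotate _ i]
    module
  calc dist (nagelPoint z) (z i)
      ≤ dist (z (i + 1)) x + dist (z (i + 2)) x + 2 * dist (incenter z) x := by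
        simp only [dist_eq_norm, hdiff]
        refine (norm_sub_le _ _).trans ?_
        rw [norm_smul, Real.norm_two]
        gcongr
        exact norm_add_le _ _
    _ ≤ 6 * r := by linarith [dist_incenter_le_of_two_vertices_near h₁ h₂]

lemma pair_incenter_nagelPoint_eq_range (h : z (i + 1) = z (i + 2)) :
    ({incenter z, nagelPoint z} : Set X) = Set.range z := by
  have h₁ : dist (z (i + 1)) (z (i + 2)) ≤ 0 := dist_le_zero.2 h
  have h₂ : dist (z (i + 2)) (z (i + 2)) ≤ 0 := (dist_self _).le
  have hσ : incenter z = z (i + 2) := dist_le_zero.1 <| by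
    simpa only [mul_zero] using dist_incenter_le_of_two_vertices_near h₁ h₂
  have hτ : nagelPoint z = z i := dist_le_zero.1 <| by
    simpa only [mul_zero] using dist_nagelPoint_le_of_two_vertices_near h₁ h₂
  rw [hσ, hτ, range_fin_three_eq_rotate z i, h, Set.pair_eq_singleton, Set.pair_comm]

lemma dist_incenter_nagelPoint_le_of_cross {j : Fin 3} (hz : ∀ k ≠ i, dist (z k) (z' j) ≤ r)
    (hz' : ∀ k ≠ j, dist (z' k) (z i) ≤ r) : dist (incenter z) (nagelPoint z') ≤ 8 * r := by
  have ne₁ (k : Fin 3) : k + 1 ≠ k := by simp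
  have ne₂ (k : Fin 3) : k + 2 ≠ k := by simp
  have hσ := dist_incenter_le_of_two_vertices_near (hz _ (ne₁ i)) (hz _ (ne₂ i))
  have hτ := dist_nagelPoint_le_of_two_vertices_near (hz' _ (ne₁ j)) (hz' _ (ne₂ j))
  linarith [dist_triangle_right (incenter z) (nagelPoint z') (z' j)]

variable (z z')

theorem hausdorffDist_pair_incenter_nagelPoint_le :
    Metric.hausdorffDist ({incenter z, nagelPoint z} : Set X) {incenter z', nagelPoint z'} ≤
      8 * Metric.hausdorffDist (Set.range z) (Set.range z') := by
  have hl := exists_dist_le_hausdorffDist_range z z'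
  have hr := exists_dist_le_hausdorffDist_range z' z
  simp only [Metric.hausdorffDist_comm (s := Set.range z'), dist_comm (z' _)] at hr
  have hr₀ : 0 ≤ Metric.hausdorffDist (Set.range z) (Set.range z') := Metric.hausdorffDist_nonneg
  rcases exists_equiv_or_exists_cross (Fintype.card_fin 3) (Fintype.card_fin 3) hl hr with
    ⟨e, he⟩ | ⟨i, j, hz, hz'⟩
  · rw [← incenter_comp_perm z' e, ← nagelPoint_comp_perm z' e]
    exact hausdorffDist_pair_le
      ((dist_incenter_incenter_le (z' := z' ∘ e) he).trans (by linarith))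
      ((dist_nagelPoint_nagelPoint_le (z' := z' ∘ e) he).trans (by linarith))
  · simp only [dist_comm (z i)] at hz'
    rw [Set.pair_comm (incenter z')]
    refine hausdorffDist_pair_le (dist_incenter_nagelPoint_le_of_cross hz hz') ?_
    rw [dist_comm]
    exact dist_incenter_nagelPoint_le_of_cross hz' hz

end Incenter

/-- The map `{a,b,c} ↦ {σ(a,b,c), τ(a,b,c)}` built from the incenter mixer `σ` and the Nagel
co-mixer `τ` on a real normed space is a `9`-Lipschitz retraction from triples onto pairs
whose image lies in the convex hull. -/
theorem normed_space_retraction_triples_onto_pairs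
    {X : Type*} [NormedAddCommGroup X] [NormedSpace ℝ X] (a b c a' b' c' : X) :
    Metric.hausdorffDist
        ({incenterMixer a b c, nagelComixer a b c} : Set X)
        ({incenterMixer a' b' c', nagelComixer a' b' c'} : Set X) ≤
      9 * Metric.hausdorffDist ({a, b, c} : Set X) ({a', b', c'} : Set X) ∧
    ((a = b ∨ a = c ∨ b = c) →
      ({incenterMixer a b c, nagelComixer a b c} : Set X) = ({a, b, c} : Set X)) ∧
    incenterMixer a b c ∈ convexHull ℝ ({a, b, c} : Set X) ∧
    nagelComixer a b c ∈ convexHull ℝ ({a, b, c} : Set X) := by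
  have range_triple (a b c : X) : Set.range ![a, b, c] = {a, b, c} :=
    range_fin_three_eq_rotate ![a, b, c] 0
  rw [← range_triple, ← range_triple]
  refine ⟨?_, ?_, incenter_mem_convexHull ![a, b, c], nagelPoint_mem_convexHull ![a, b, c]⟩
  · refine (hausdorffDist_pair_incenter_nagelPoint_le ![a, b, c] ![a', b', c']).trans ?_
    gcongr
    · exact Metric.hausdorffDist_nonneg
    · norm_num
  · rintro (h | h | h)
    · exact pair_incenter_nagelPoint_eq_range (z := ![a, b, c]) (i := 2) h
    · exact pair_incenter_nagelPoint_eq_range (z := ![a, b, c]) (i := 1) h.symm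
    · exact pair_incenter_nagelPoint_eq_range (z := ![a, b, c]) (i := 0) h
end
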